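/- Let A ∈ M_n(ℝ) be a positive semidefinite real symmetric matrix, and let α_1, …, α_k be a partition of {1, …, n} into disjoint nonempty index sets. Then rank(A) ≤ ∑_{i=1}^k rank(A[α_i]), where A[α_i] denotes the principal submatrix of A with rows and columns indexed by α_i, and all ranks are taken over ℝ. -/

import Mathlib

/-!
A positive semidefinite real matrix factors as `A = Bᵀ B`, so `rank A = rank B` is the dimension
of the span of the columns of `B`. The principal submatrix on `s` is `B_sᵀ B_s`, where `B_s` keeps
the columns of `B` indexed by `s`, so its rank is the dimension of the span of those columns.
Since the sets `α i` cover the index set, these spans together generate the whole column space,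
and dimension is subadditive under sums of subspaces.
-/

open Matrix

theorem finrank_finset_sup_le_sum {ι V : Type*} [AddCommGroup V] [Module ℝ V]
    [FiniteDimensional ℝ V] (s : Finset ι) (W : ι → Submodule ℝ V) :
    Module.finrank ℝ (s.sup W : Submodule ℝ V) ≤ ∑ i ∈ s, Module.finrank ℝ (W i) := by
  classical
  induction s using Finset.induction_on with
  | empty => simp
  | insert a s ha ih =>
    rw [Finset.sup_insert, Finset.sum_insert ha]
    exact (Submodule.finrank_add_le_finrank_add_finrank _ _).trans (by gcongr)

/-- Lundquist–Barrett rank inequality over `ℝ`: for a positive semidefinite real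
symmetric matrix `A ∈ Mₙ(ℝ)` and a partition of the index set into disjoint nonempty
sets `α 1, …, α k`, the rank of `A` is at most the sum of the ranks of the principal
submatrices `A[α i]`, all ranks taken over `ℝ`. -/
theorem rank_le_sum_rank_submatrix_real {n k : ℕ} (A : Matrix (Fin n) (Fin n) ℝ)
    (hsymm : A.IsSymm) (hpsd : ∀ x : Fin n → ℝ, 0 ≤ x ⬝ᵥ A.mulVec x)
    (α : Fin k → Finset (Fin n))
    (hne : ∀ i, (α i).Nonempty)
    (hdisj : ∀ i j, i ≠ j → Disjoint (α i) (α j))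
    (hcover : ∀ x, ∃ i, x ∈ α i) :
    A.rank ≤ ∑ i, (A.submatrix (fun x : α i => (x : Fin n)) (fun x : α i => (x : Fin n))).rank := by
  have hA : A.PosSemidef := by
    refine Matrix.PosSemidef.of_dotProduct_mulVec_nonneg ?_ ?_
    · rw [Matrix.IsHermitian, Matrix.conjTranspose_eq_transpose_of_trivial]
      exact hsymm
    · simpa using hpsd
  obtain ⟨B, rfl⟩ : ∃ B : Matrix (Fin n) (Fin n) ℝ, A = Bᵀ * B := by
    open scoped MatrixOrder in
    obtain ⟨B, hB⟩ := CStarAlgebra.nonneg_iff_eq_star_mul_self.mp hA.nonneg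
    exact ⟨B, by rw [hB, Matrix.star_eq_conjTranspose,
      Matrix.conjTranspose_eq_transpose_of_trivial]⟩
  let W : Fin k → Submodule ℝ (Fin n → ℝ) := fun i =>
    Submodule.span ℝ (Set.range (B.submatrix id (fun x : α i => (x : Fin n))).col)
  have hW : ∀ i, ((Bᵀ * B).submatrix (fun x : α i => (x : Fin n))
      (fun x : α i => (x : Fin n))).rank = Module.finrank ℝ (W i) := by
    intro i
    rw [← Matrix.rank_eq_finrank_span_cols,
      ← Matrix.rank_transpose_mul_self (B.submatrix id _)]
    rfl
  simp_rw [hW]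
  rw [Matrix.rank_transpose_mul_self, Matrix.rank_eq_finrank_span_cols]
  refine (Submodule.finrank_mono ?_).trans (finrank_finset_sup_le_sum Finset.univ W)
  rw [Submodule.span_le]
  rintro _ ⟨j, rfl⟩
  obtain ⟨i, hi⟩ := hcover j
  exact (Finset.le_sup (f := W) (Finset.mem_univ i)) (Submodule.subset_span ⟨⟨j, hi⟩, rfl⟩)
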